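/- L² bound for the time reconstruction error (Lemma 4.2, eq. (4.5c)): the time reconstruction Û satisfies ∫_I ‖V(t) − Û(t)‖²_H dt ≤ τ³ · c₂(q)² · ‖j‖²_H, where c₂(q)² = q/(4(q−2)(q−1)(2q−1)(2q+1)) for q ≥ 3 and c₂(2)² = 1/15. -/

import Mathlib

open scoped RealInnerProductSpace
open MeasureTheory

/-- Evaluation of the `H`-valued polynomial with coefficients `c` (degree at most `k`):
`t ↦ ∑_{i=0}^{k} tⁱ • c i`. -/
noncomputable def polyEval {H : Type*} [NormedAddCommGroup H] [NormedSpace ℝ H]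
    (k : ℕ) (c : ℕ → H) (t : ℝ) : H :=
  ∑ i ∈ Finset.range (k + 1), t ^ i • c i

/-- Coefficients of the termwise derivative of the polynomial with coefficients `c`. -/
noncomputable def dC {H : Type*} [NormedAddCommGroup H] [NormedSpace ℝ H]
    (c : ℕ → H) : ℕ → H := fun i => ((i : ℝ) + 1) • c (i + 1)

/-- `u` is the coefficient function of the time reconstruction `Û` (a polynomial of degree at
most `q+1`) of the polynomial `V` with coefficient function `v` (degree at most `q`), with
jump `j`, on the interval `I = [t₀, t₁]`:
(i) `∫_I ⟨Û'' - V'', W⟩ = ⟨j, W(t₀)⟩` for all `H`-valued polynomials `W` of degree at most `q-1`;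
(ii) `Û(t₀) = V(t₀)`; (iii) `Û'(t₀) = V'(t₀) - j`. -/
def IsTimeRecon {H : Type*} [NormedAddCommGroup H] [InnerProductSpace ℝ H]
    (t₀ t₁ : ℝ) (q : ℕ) (v : ℕ → H) (j : H) (u : ℕ → H) : Prop :=
  (∀ i, q + 1 < i → u i = 0) ∧
  (∀ w : ℕ → H, (∀ i, q ≤ i → w i = 0) →
    (∫ t in t₀..t₁,
        ⟪polyEval (q + 1) (dC (dC u)) t - polyEval (q + 1) (dC (dC v)) t,
          polyEval (q + 1) w t⟫) = ⟪j, polyEval (q + 1) w t₀⟫) ∧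
  polyEval (q + 1) u t₀ = polyEval (q + 1) v t₀ ∧
  polyEval (q + 1) (dC u) t₀ = polyEval (q + 1) (dC v) t₀ - j

/-- The constant `c₂(q)²`: `q / (4(q-2)(q-1)(2q-1)(2q+1))` for `q ≥ 3` and `1/15` for `q = 2`. -/
noncomputable def c2sq (q : ℕ) : ℝ :=
  if q = 2 then 1 / 15
  else (q : ℝ) / (4 * ((q : ℝ) - 2) * ((q : ℝ) - 1) * (2 * (q : ℝ) - 1) * (2 * (q : ℝ) + 1))

/-!
Reconstructions with the same data coincide on `I`, since testing (i) with the difference of their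
second derivatives shows that this difference vanishes. Hence `Û = V + F • j` on `I` for a scalar
polynomial `F`, and the error is `‖F‖²_{L²(I)} ‖j‖²`. Integrating (i) by parts, `F'` equals `-1` at
`t₀`, vanishes at `t₁`, and is orthogonal to all polynomials of degree at most `q - 2`. On `[0, 1]`,
with `Lₙ` the shifted Legendre polynomials normalised by `Lₙ(0) = 1` (so `Lₙ(1) = (-1)ⁿ`), this
forces `F' = -(L_{q-1} + L_q) / 2`. The recurrence `L'ₙ₊₂ = L'ₙ - 2(2n+3) Lₙ₊₁` integrates it
explicitly, and orthogonality gives `‖F‖² = q / (2(2q-3)(2q-1)(2q+1)(2q+3)) ≤ c₂(q)²`. Scaling to an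
interval of length `τ` produces the factor `τ³`.
-/

open Polynomial Set

section PolynomialIntegral

/-- The functional `p ↦ ∫ x in a..b, p x` on real polynomials, bundled as a linear map; the `L²`
pairing of polynomials on `[a, b]` is `polyIntegral a b (p * r)`. -/
noncomputable def polyIntegral (a b : ℝ) : ℝ[X] →ₗ[ℝ] ℝ where
  toFun p := ∫ x in a..b, p.eval x
  map_add' p r := by
    simp_rw [eval_add]
    exact intervalIntegral.integral_add (p.continuous.intervalIntegrable a b)
      (r.continuous.intervalIntegrable a b)
  map_smul' c p := by
    simp_rw [eval_smul]
    exact intervalIntegral.integral_smul c _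

lemma polyIntegral_apply (a b : ℝ) (p : ℝ[X]) :
    polyIntegral a b p = ∫ x in a..b, p.eval x := rfl

lemma polyIntegral_derivative (a b : ℝ) (p : ℝ[X]) :
    polyIntegral a b (derivative p) = p.eval b - p.eval a :=
  intervalIntegral.integral_eq_sub_of_hasDerivAt (fun x _ => p.hasDerivAt x)
    ((derivative p).continuous.intervalIntegrable a b)

lemma polyIntegral_derivative_mul (a b : ℝ) (p r : ℝ[X]) :
    polyIntegral a b (derivative p * r) =
      p.eval b * r.eval b - p.eval a * r.eval a - polyIntegral a b (p * derivative r) := by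
  rw [eq_sub_iff_add_eq, ← map_add, ← derivative_mul, polyIntegral_derivative, eval_mul, eval_mul]

lemma polyIntegral_iterate_derivative_mul {a b : ℝ} {n : ℕ} {p : ℝ[X]}
    (ha : ∀ i < n, (derivative^[i] p).eval a = 0) (hb : ∀ i < n, (derivative^[i] p).eval b = 0)
    (r : ℝ[X]) :
    polyIntegral a b (derivative^[n] p * r) =
      (-1) ^ n * polyIntegral a b (p * derivative^[n] r) := by
  induction n generalizing r with
  | zero => simp
  | succ n ih =>
    rw [Function.iterate_succ_apply', polyIntegral_derivative_mul, ha n n.lt_succ_self,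
      hb n n.lt_succ_self, ih (fun i hi => ha i (hi.trans n.lt_succ_self))
      (fun i hi => hb i (hi.trans n.lt_succ_self)), ← Function.iterate_succ_apply, pow_succ]
    ring

lemma polyIntegral_comp_affine {a b : ℝ} (hab : a ≠ b) (p : ℝ[X]) :
    polyIntegral a b (p.comp (C (b - a)⁻¹ * (X - C a))) = (b - a) * polyIntegral 0 1 p := by
  have hba : b - a ≠ 0 := sub_ne_zero.mpr hab.symm
  have key := intervalIntegral.integral_comp_mul_sub (a := a) (b := b) (fun x => p.eval x)
    (inv_ne_zero hba) ((b - a)⁻¹ * a)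
  rw [sub_self, ← mul_sub, inv_mul_cancel₀ hba, inv_inv, smul_eq_mul] at key
  simpa only [polyIntegral_apply, eval_comp, eval_mul, eval_sub, eval_C, eval_X, mul_sub] using key

end PolynomialIntegral

section Legendre

open scoped Nat

/-- The shifted Legendre polynomial `x ↦ Pₙ(1 - 2x)` on `[0, 1]` with real coefficients. -/
noncomputable def realLegendre (n : ℕ) : ℝ[X] :=
  (shiftedLegendre n).map (Int.castRingHom ℝ)

lemma natDegree_realLegendre (n : ℕ) : (realLegendre n).natDegree = n := by
  rw [realLegendre, natDegree_map_eq_of_injective (RingHom.injective_int _),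
    natDegree_shiftedLegendre]

lemma realLegendre_zero : realLegendre 0 = 1 := by
  simp [realLegendre, shiftedLegendre]

lemma realLegendre_eval_zero (n : ℕ) : (realLegendre n).eval 0 = 1 := by
  simp [realLegendre, ← coeff_zero_eq_eval_zero, coeff_shiftedLegendre]

lemma realLegendre_eval_one (n : ℕ) : (realLegendre n).eval 1 = (-1) ^ n := by
  have symm : (realLegendre n).eval 1 = (-1) ^ n * (realLegendre n).eval (1 - 1) := by
    simpa only [realLegendre, eval_map, ← algebraMap_int_eq, ← aeval_def]
      using shiftedLegendre_eval_symm n (1 : ℝ)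
  rw [symm, sub_self, realLegendre_eval_zero, mul_one]

lemma realLegendre_eq_iterate_derivative (n : ℕ) :
    realLegendre n = (n ! : ℝ)⁻¹ • derivative^[n] ((X * (1 - X)) ^ n) := by
  have rodrigues : (n ! : ℝ[X]) * realLegendre n = derivative^[n] ((X * (1 - X)) ^ n) := by
    simpa [← iterate_derivative_map, mul_pow, realLegendre] using
      congrArg (Polynomial.map (Int.castRingHom ℝ)) (factorial_mul_shiftedLegendre_eq n)
  rw [← rodrigues, ← nsmul_eq_mul, ← Nat.cast_smul_eq_nsmul ℝ,
    inv_smul_smul₀ (Nat.cast_ne_zero.mpr n.factorial_ne_zero)]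

lemma polyIntegral_realLegendre_mul_eq_zero {n : ℕ} {w : ℝ[X]} (hw : w.natDegree < n) :
    polyIntegral 0 1 (realLegendre n * w) = 0 := by
  have vanish {x : ℝ} (hx : x * (1 - x) = 0) :
      ∀ i < n, (derivative^[i] ((X * (1 - X) : ℝ[X]) ^ n)).eval x = 0 := by
    intro i hi
    refine eval_eq_zero_of_dvd_of_eval_eq_zero
      (pow_sub_dvd_iterate_derivative_pow (X * (1 - X) : ℝ[X]) n i) ?_
    simp [hx, Nat.sub_ne_zero_of_lt hi]
  rw [realLegendre_eq_iterate_derivative, smul_mul_assoc, map_smul,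
    polyIntegral_iterate_derivative_mul (vanish (by simp)) (vanish (by simp)),
    iterate_derivative_eq_zero hw]
  simp

lemma derivative_derivative_mul_one_sub_pow (n : ℕ) :
    derivative (derivative ((X * (1 - X) : ℝ[X]) ^ (n + 2))) =
      ((n + 2) * (n + 1) : ℝ) • (X * (1 - X)) ^ n
        - (2 * (n + 2) * (2 * n + 3) : ℝ) • (X * (1 - X)) ^ (n + 1) := by
  simp only [derivative_pow_succ, derivative_mul, derivative_sub, derivative_X, derivative_one,
    derivative_natCast, map_zero, smul_eq_C_mul, map_add, map_mul, map_natCast, map_ofNat, map_one]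
  push_cast
  ring

lemma derivative_realLegendre_add_two (n : ℕ) :
    derivative (realLegendre (n + 2)) =
      derivative (realLegendre n) - (2 * (2 * n + 3) : ℝ) • realLegendre (n + 1) := by
  have hn : (n ! : ℝ) ≠ 0 := Nat.cast_ne_zero.mpr n.factorial_ne_zero
  have iterate_split : derivative^[n + 3] ((X * (1 - X) : ℝ[X]) ^ (n + 2)) =
      ((n + 2) * (n + 1) : ℝ) • derivative^[n + 1] ((X * (1 - X)) ^ n)
        - (2 * (n + 2) * (2 * n + 3) : ℝ) • derivative^[n + 1] ((X * (1 - X)) ^ (n + 1)) := by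
    rw [Function.iterate_add_apply derivative (n + 1) 2,
      show derivative^[2] ((X * (1 - X) : ℝ[X]) ^ (n + 2)) = derivative (derivative _) from rfl,
      derivative_derivative_mul_one_sub_pow, iterate_derivative_sub,
      iterate_derivative_smul, iterate_derivative_smul]
  simp only [realLegendre_eq_iterate_derivative, derivative_smul, ← Function.iterate_succ_apply',
    iterate_split, smul_sub, smul_smul, Nat.factorial_succ]
  push_cast
  congr 2 <;> field_simp <;> ring

lemma polyIntegral_realLegendre_mul_self (n : ℕ) :
    polyIntegral 0 1 (realLegendre n * realLegendre n) = 1 / (2 * n + 1) := by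
  cases n with
  | zero => simp [realLegendre_zero, polyIntegral_apply]
  | succ n =>
    have orth_succ :
        polyIntegral 0 1 (realLegendre (n + 2) * derivative (realLegendre (n + 1))) = 0 :=
      polyIntegral_realLegendre_mul_eq_zero <|
        (natDegree_derivative_le _).trans_lt (by rw [natDegree_realLegendre]; omega)
    have orth_pred : polyIntegral 0 1 (derivative (realLegendre n) * realLegendre (n + 1)) = 0 := by
      rw [mul_comm]
      exact polyIntegral_realLegendre_mul_eq_zero <|
        (natDegree_derivative_le _).trans_lt (by rw [natDegree_realLegendre]; omega)
    have parts := polyIntegral_derivative_mul 0 1 (realLegendre (n + 2)) (realLegendre (n + 1))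
    rw [derivative_realLegendre_add_two, sub_mul, map_sub, smul_mul_assoc, map_smul, orth_pred,
      orth_succ] at parts
    have sign : (-1 : ℝ) ^ (n + 2) * (-1) ^ (n + 1) = -1 := by
      rw [← pow_add, Odd.neg_one_pow ⟨n + 1, by ring⟩]
    simp only [realLegendre_eval_one, realLegendre_eval_zero, smul_eq_mul, sign] at parts
    rw [eq_div_iff (by positivity)]
    push_cast
    linear_combination -parts / 2

lemma polyIntegral_realLegendre_mul (m n : ℕ) :
    polyIntegral 0 1 (realLegendre m * realLegendre n) =
      if m = n then (1 / (2 * n + 1) : ℝ) else 0 := by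
  split_ifs with h
  · rw [h, polyIntegral_realLegendre_mul_self]
  · rcases Nat.lt_or_gt_of_ne h with h | h
    · rw [mul_comm, polyIntegral_realLegendre_mul_eq_zero (by rwa [natDegree_realLegendre])]
    · rw [polyIntegral_realLegendre_mul_eq_zero (by rwa [natDegree_realLegendre])]

end Legendre

section Profile

/-- `IsReconProfile a b q F` says that `F` is the time reconstruction on `[a, b]` of the zero
polynomial for the scalar jump `1`. By linearity, the reconstruction of `V` for the jump `j` is
then `V + F • j`. -/
structure IsReconProfile (a b : ℝ) (q : ℕ) (F : ℝ[X]) : Prop where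
  natDegree_le : F.natDegree ≤ q + 1
  eval_left : F.eval a = 0
  eval_derivative_left : (derivative F).eval a = -1
  integral_mul (w : ℝ[X]) (hw : w.natDegree < q) :
    polyIntegral a b (derivative (derivative F) * w) = w.eval a

/-- The antiderivative of `realLegendre (n + 1)` that vanishes at both ends of `[0, 1]`. -/
noncomputable def legendreAntideriv (n : ℕ) : ℝ[X] :=
  (1 / (2 * (2 * n + 3)) : ℝ) • (realLegendre n - realLegendre (n + 2))

lemma derivative_legendreAntideriv (n : ℕ) :
    derivative (legendreAntideriv n) = realLegendre (n + 1) := by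
  have hn : (2 * (2 * n + 3) : ℝ) ≠ 0 := by positivity
  rw [legendreAntideriv, derivative_smul, derivative_sub, derivative_realLegendre_add_two,
    sub_sub_cancel, smul_smul, one_div_mul_cancel hn, one_smul]

lemma legendreAntideriv_eval_zero (n : ℕ) : (legendreAntideriv n).eval 0 = 0 := by
  simp [legendreAntideriv, realLegendre_eval_zero]

lemma natDegree_legendreAntideriv_le (n : ℕ) : (legendreAntideriv n).natDegree ≤ n + 2 := by
  refine (natDegree_smul_le _ _).trans ((natDegree_sub_le _ _).trans ?_)
  simp [natDegree_realLegendre]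

lemma polyIntegral_legendreAntideriv_sq (n : ℕ) :
    polyIntegral 0 1 (legendreAntideriv n ^ 2) =
      1 / (2 * (2 * n + 1) * (2 * n + 3) * (2 * n + 5)) := by
  simp only [legendreAntideriv, sq, smul_mul_smul_comm, mul_sub, sub_mul, map_smul, map_sub,
    polyIntegral_realLegendre_mul, smul_eq_mul]
  simp only [↓reduceIte, Nat.add_eq_left, OfNat.ofNat_ne_zero, Nat.left_eq_add, Nat.cast_add,
    Nat.cast_ofNat]
  field_simp
  ring

lemma polyIntegral_legendreAntideriv_mul_succ (n : ℕ) :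
    polyIntegral 0 1 (legendreAntideriv n * legendreAntideriv (n + 1)) = 0 := by
  simp [legendreAntideriv, mul_sub, sub_mul, polyIntegral_realLegendre_mul,
    show n ≠ n + 1 + 2 by omega]

/-- The reconstruction profile on `[0, 1]` for `q = n + 2`. -/
noncomputable def unitReconProfile (n : ℕ) : ℝ[X] :=
  (-1 / 2 : ℝ) • (legendreAntideriv n + legendreAntideriv (n + 1))

lemma derivative_unitReconProfile (n : ℕ) :
    derivative (unitReconProfile n) =
      (-1 / 2 : ℝ) • (realLegendre (n + 1) + realLegendre (n + 2)) := by
  rw [unitReconProfile, derivative_smul, derivative_add, derivative_legendreAntideriv,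
    derivative_legendreAntideriv]

lemma isReconProfile_unitReconProfile (n : ℕ) :
    IsReconProfile 0 1 (n + 2) (unitReconProfile n) where
  natDegree_le := (natDegree_smul_le _ _).trans <| natDegree_add_le_of_degree_le
    ((natDegree_legendreAntideriv_le n).trans (Nat.le_succ _))
    (natDegree_legendreAntideriv_le (n + 1))
  eval_left := by simp [unitReconProfile, legendreAntideriv_eval_zero]
  eval_derivative_left := by
    norm_num [derivative_unitReconProfile, realLegendre_eval_zero]
  integral_mul w hw := by
    have hw' : (derivative w).natDegree < n + 1 :=
      (natDegree_derivative_le w).trans_lt (by omega)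
    rw [polyIntegral_derivative_mul, derivative_unitReconProfile, smul_mul_assoc, map_smul,
      add_mul, map_add, polyIntegral_realLegendre_mul_eq_zero hw',
      polyIntegral_realLegendre_mul_eq_zero (hw'.trans (Nat.lt_succ_self _))]
    simp only [eval_smul, eval_add, realLegendre_eval_zero, realLegendre_eval_one, smul_eq_mul]
    ring

lemma polyIntegral_unitReconProfile_sq (n : ℕ) :
    polyIntegral 0 1 (unitReconProfile n ^ 2) =
      (n + 2) / (2 * (2 * n + 1) * (2 * n + 3) * (2 * n + 5) * (2 * n + 7)) := by
  simp only [unitReconProfile, _root_.smul_pow, add_sq, map_smul, map_add, mul_assoc,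
    polyIntegral_legendreAntideriv_sq, smul_eq_mul]
  rw [← C_ofNat, C_mul', map_smul, polyIntegral_legendreAntideriv_mul_succ]
  push_cast
  field_simp
  ring

/-- The pullback of `F` from `[0, 1]` to `[a, b]`, scaled by `b - a` so that the slope at the left
endpoint is preserved. -/
noncomputable def rescaleProfile (a b : ℝ) (F : ℝ[X]) : ℝ[X] :=
  (b - a) • F.comp (C (b - a)⁻¹ * (X - C a))

lemma derivative_rescaleProfile {a b : ℝ} (hab : a ≠ b) (F : ℝ[X]) :
    derivative (rescaleProfile a b F) = (derivative F).comp (C (b - a)⁻¹ * (X - C a)) := by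
  have hba : b - a ≠ 0 := sub_ne_zero.mpr hab.symm
  simp [rescaleProfile, derivative_comp, ← smul_eq_C_mul, smul_smul, hba]

lemma IsReconProfile.rescale {a b : ℝ} (hab : a ≠ b) {q : ℕ} {F : ℝ[X]}
    (hF : IsReconProfile 0 1 q F) : IsReconProfile a b q (rescaleProfile a b F) where
  natDegree_le := by
    refine (natDegree_smul_le _ _).trans (natDegree_comp_le.trans ?_)
    have : (C (b - a)⁻¹ * (X - C a)).natDegree ≤ 1 :=
      (natDegree_C_mul_le _ _).trans (natDegree_X_sub_C_le a)
    nlinarith [hF.natDegree_le]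
  eval_left := by simp [rescaleProfile, hF.eval_left]
  eval_derivative_left := by
    simp [derivative_rescaleProfile hab, hF.eval_derivative_left]
  integral_mul w hw := by
    have hba : b - a ≠ 0 := sub_ne_zero.mpr hab.symm
    set toUnit : ℝ[X] := C (b - a)⁻¹ * (X - C a) with h_toUnit
    set fromUnit : ℝ[X] := C (b - a) * X + C a with h_fromUnit
    have comp_inverse : fromUnit.comp toUnit = X := by
      rw [h_fromUnit, add_comp, mul_comp, C_comp, C_comp, X_comp, h_toUnit, ← mul_assoc, ← C_mul,
        mul_inv_cancel₀ hba, C_1, one_mul, sub_add_cancel]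
    have pullback : derivative (derivative (rescaleProfile a b F)) * w =
        (b - a)⁻¹ • (derivative (derivative F) * w.comp fromUnit).comp toUnit := by
      rw [mul_comp, comp_assoc, comp_inverse, comp_X, derivative_rescaleProfile hab,
        derivative_comp]
      simp [h_toUnit, ← smul_eq_C_mul]
    have natDegree_pullback : (w.comp fromUnit).natDegree < q := by
      rwa [natDegree_comp, natDegree_linear hba, mul_one]
    rw [pullback, map_smul, polyIntegral_comp_affine hab, hF.integral_mul _ natDegree_pullback,
      smul_eq_mul, inv_mul_cancel_left₀ hba]
    simp [h_fromUnit]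

lemma polyIntegral_rescaleProfile_sq {a b : ℝ} (hab : a ≠ b) (F : ℝ[X]) :
    polyIntegral a b (rescaleProfile a b F ^ 2) = (b - a) ^ 3 * polyIntegral 0 1 (F ^ 2) := by
  rw [rescaleProfile, _root_.smul_pow, ← pow_comp, map_smul, polyIntegral_comp_affine hab,
    smul_eq_mul]
  ring

end Profile

lemma eqOn_zero_of_integral_norm_sq_eq_zero {E : Type*} [NormedAddCommGroup E] {a b : ℝ}
    (hab : a < b) {f : ℝ → E} (hf : ContinuousOn f (Icc a b)) (hint : ∫ t in a..b, ‖f t‖ ^ 2 = 0) :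
    EqOn f 0 (Icc a b) := by
  by_contra hne
  obtain ⟨t, ht, hft⟩ : ∃ t ∈ Icc a b, f t ≠ 0 := by
    simpa [EqOn, and_assoc] using hne
  exact (intervalIntegral.integral_pos hab (hf.norm.pow 2) (fun x _ => sq_nonneg ‖f x‖)
    ⟨t, ht, pow_pos (norm_pos_iff.mpr hft) 2⟩).ne' hint

section PolyEval

variable {H : Type*} [NormedAddCommGroup H] [NormedSpace ℝ H]

lemma polyEval_add (k : ℕ) (c d : ℕ → H) (t : ℝ) :
    polyEval k (c + d) t = polyEval k c t + polyEval k d t := by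
  simp [polyEval, Finset.sum_add_distrib]

lemma polyEval_sub (k : ℕ) (c d : ℕ → H) (t : ℝ) :
    polyEval k (c - d) t = polyEval k c t - polyEval k d t := by
  simp [polyEval, smul_sub, Finset.sum_sub_distrib]

lemma dC_add (c d : ℕ → H) : dC (c + d) = dC c + dC d := by
  ext i
  simp [dC]

lemma dC_coeff_smul (p : ℝ[X]) (x : H) :
    dC (fun i => p.coeff i • x) = fun i => (derivative p).coeff i • x := by
  ext i
  rw [dC, smul_smul, coeff_derivative, mul_comm]

lemma polyEval_coeff_smul {p : ℝ[X]} {k : ℕ} (hp : p.natDegree ≤ k) (x : H) (t : ℝ) :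
    polyEval k (fun i => p.coeff i • x) t = p.eval t • x := by
  rw [eval_eq_sum_range' (Nat.lt_succ_of_le hp), Finset.sum_smul, polyEval]
  simp_rw [smul_smul, mul_comm]

lemma continuous_polyEval (k : ℕ) (c : ℕ → H) : Continuous (polyEval k c) := by
  unfold polyEval
  fun_prop

lemma hasDerivAt_polyEval {k : ℕ} {c : ℕ → H} (hc : c (k + 1) = 0) (t : ℝ) :
    HasDerivAt (polyEval k c) (polyEval k (dC c) t) t := by
  have termwise : HasDerivAt (polyEval k c)
      (∑ i ∈ Finset.range (k + 1), ((i : ℝ) * t ^ (i - 1)) • c i) t :=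
    HasDerivAt.fun_sum fun i _ => (hasDerivAt_pow i t).smul_const (c i)
  convert termwise using 1
  rw [Finset.sum_range_succ', polyEval, Finset.sum_range_succ]
  simp [dC, hc, smul_smul, mul_comm]

lemma eqOn_polyEval_of_eqOn_dC {a b : ℝ} {k : ℕ} {c d : ℕ → H} (hc : c (k + 1) = 0)
    (hd : d (k + 1) = 0) (hderiv : EqOn (polyEval k (dC c)) (polyEval k (dC d)) (Icc a b))
    (ha : polyEval k c a = polyEval k d a) :
    EqOn (polyEval k c) (polyEval k d) (Icc a b) :=
  eq_of_has_deriv_right_eq (fun t _ => (hasDerivAt_polyEval hc t).hasDerivWithinAt)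
    (fun t ht => hderiv (Ico_subset_Icc_self ht) ▸ (hasDerivAt_polyEval hd t).hasDerivWithinAt)
    (continuous_polyEval k c).continuousOn (continuous_polyEval k d).continuousOn ha

end PolyEval

section TimeReconstruction

variable {H : Type*} [NormedAddCommGroup H] [InnerProductSpace ℝ H]

lemma exists_polynomial_eval_eq_inner (k : ℕ) {n : ℕ} (hn : 0 < n) {w : ℕ → H}
    (hw : ∀ i, n ≤ i → w i = 0) (x : H) :
    ∃ p : ℝ[X], p.natDegree < n ∧ ∀ t, p.eval t = ⟪x, polyEval k w t⟫ := by
  refine ⟨∑ i ∈ Finset.range (k + 1), monomial i ⟪x, w i⟫, ?_, fun t => ?_⟩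
  · refine Nat.lt_of_le_pred hn (natDegree_sum_le_of_forall_le _ _ fun i _ => ?_)
    rcases lt_or_ge i n with hi | hi
    · exact (natDegree_monomial_le _).trans (Nat.le_pred_of_lt hi)
    · simp [hw i hi]
  · simp [polyEval, inner_sum, eval_finsetSum, inner_smul_right, mul_comm]

lemma IsTimeRecon.eqOn {t₀ t₁ : ℝ} (h01 : t₀ < t₁) {q : ℕ} {v u₁ u₂ : ℕ → H} {j : H}
    (h₁ : IsTimeRecon t₀ t₁ q v j u₁) (h₂ : IsTimeRecon t₀ t₁ q v j u₂) :
    EqOn (polyEval (q + 1) u₁) (polyEval (q + 1) u₂) (Icc t₀ t₁) := by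
  obtain ⟨deg₁, weak₁, value₁, slope₁⟩ := h₁
  obtain ⟨deg₂, weak₂, value₂, slope₂⟩ := h₂
  set w : ℕ → H := dC (dC u₁) - dC (dC u₂) with hw
  have w_eq_zero : ∀ i, q ≤ i → w i = 0 := by
    intro i hi
    simp [hw, dC, deg₁ (i + 1 + 1) (by omega), deg₂ (i + 1 + 1) (by omega)]
  have integrable (u : ℕ → H) : IntervalIntegrable (fun t =>
      ⟪polyEval (q + 1) (dC (dC u)) t - polyEval (q + 1) (dC (dC v)) t, polyEval (q + 1) w t⟫)
      volume t₀ t₁ :=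
    (((continuous_polyEval _ _).sub (continuous_polyEval _ _)).inner
      (continuous_polyEval _ _)).intervalIntegrable _ _
  have integral_w : ∫ t in t₀..t₁, ‖polyEval (q + 1) w t‖ ^ 2 = 0 := by
    have h := sub_eq_zero.mpr ((weak₁ w w_eq_zero).trans (weak₂ w w_eq_zero).symm)
    rw [← intervalIntegral.integral_sub (integrable u₁) (integrable u₂)] at h
    simpa only [← inner_sub_left, sub_sub_sub_cancel_right, ← polyEval_sub, ← hw,
      real_inner_self_eq_norm_sq] using h
  have second : EqOn (polyEval (q + 1) (dC (dC u₁))) (polyEval (q + 1) (dC (dC u₂)))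
      (Icc t₀ t₁) := fun t ht => sub_eq_zero.mp <| (polyEval_sub _ _ _ t).symm.trans <|
    eqOn_zero_of_integral_norm_sq_eq_zero h01 (continuous_polyEval _ w).continuousOn integral_w ht
  have first : EqOn (polyEval (q + 1) (dC u₁)) (polyEval (q + 1) (dC u₂)) (Icc t₀ t₁) :=
    eqOn_polyEval_of_eqOn_dC (by simp [dC, deg₁ (q + 1 + 1 + 1)])
      (by simp [dC, deg₂ (q + 1 + 1 + 1)]) second (slope₁.trans slope₂.symm)
  exact eqOn_polyEval_of_eqOn_dC (deg₁ _ (Nat.lt_succ_self _)) (deg₂ _ (Nat.lt_succ_self _)) first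
    (value₁.trans value₂.symm)

lemma IsReconProfile.isTimeRecon {t₀ t₁ : ℝ} {q : ℕ} (hq : 0 < q) {F : ℝ[X]}
    (hF : IsReconProfile t₀ t₁ q F) {v : ℕ → H} (hv : ∀ i, q + 1 < i → v i = 0) (j : H) :
    IsTimeRecon t₀ t₁ q v j (v + fun i => F.coeff i • j) := by
  have deg' : (derivative F).natDegree ≤ q + 1 :=
    (natDegree_derivative_le F).trans ((Nat.sub_le _ _).trans hF.natDegree_le)
  have deg'' : (derivative (derivative F)).natDegree ≤ q + 1 :=
    (natDegree_derivative_le _).trans ((Nat.sub_le _ _).trans deg')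
  refine ⟨fun i hi => ?_, fun w hw => ?_, ?_, ?_⟩
  · simp [hv i hi, coeff_eq_zero_of_natDegree_lt (hF.natDegree_le.trans_lt hi)]
  · obtain ⟨p, hp, eval_p⟩ := exists_polynomial_eval_eq_inner (q + 1) hq hw j
    rw [← eval_p, ← hF.integral_mul p hp, polyIntegral_apply]
    simp only [dC_add, dC_coeff_smul, polyEval_add, polyEval_coeff_smul deg'', add_sub_cancel_left,
      real_inner_smul_left, eval_mul, eval_p]
  · rw [polyEval_add, polyEval_coeff_smul hF.natDegree_le, hF.eval_left, zero_smul, add_zero]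
  · rw [dC_add, dC_coeff_smul, polyEval_add, polyEval_coeff_smul deg', hF.eval_derivative_left,
      neg_one_smul, sub_eq_add_neg]

lemma IsTimeRecon.integral_norm_sub_sq_eq {t₀ t₁ : ℝ} (h01 : t₀ < t₁) {q : ℕ} (hq : 0 < q)
    {v u : ℕ → H} (hv : ∀ i, q + 1 < i → v i = 0) {j : H} (hu : IsTimeRecon t₀ t₁ q v j u)
    {F : ℝ[X]} (hF : IsReconProfile t₀ t₁ q F) :
    ∫ t in t₀..t₁, ‖polyEval (q + 1) v t - polyEval (q + 1) u t‖ ^ 2 =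
      polyIntegral t₀ t₁ (F ^ 2) * ‖j‖ ^ 2 := by
  rw [polyIntegral_apply, ← intervalIntegral.integral_mul_const]
  refine intervalIntegral.integral_congr fun t ht => ?_
  rw [uIcc_of_le h01.le] at ht
  have u_eq : polyEval (q + 1) u t = polyEval (q + 1) v t + F.eval t • j := by
    rw [hu.eqOn h01 (hF.isTimeRecon hq hv j) ht, polyEval_add,
      polyEval_coeff_smul hF.natDegree_le]
  simp [u_eq, norm_smul, mul_pow]

lemma polyIntegral_unitReconProfile_sq_le_c2sq (n : ℕ) :
    polyIntegral 0 1 (unitReconProfile n ^ 2) ≤ c2sq (n + 2) := by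
  rw [polyIntegral_unitReconProfile_sq, c2sq]
  rcases n with _ | n
  · norm_num
  · rw [if_neg (by omega)]
    have c2sq_denominator : 4 * (((n + 1 + 2 : ℕ) : ℝ) - 2) * ((n + 1 + 2 : ℕ) - 1) *
        (2 * (n + 1 + 2 : ℕ) - 1) * (2 * (n + 1 + 2 : ℕ) + 1) =
          4 * (n + 1) * (n + 2) * (2 * n + 5) * (2 * n + 7) := by
      push_cast
      ring
    have denominator_le : (4 * (n + 1) * (n + 2) * (2 * n + 5) * (2 * n + 7) : ℝ) ≤
        2 * (2 * n + 3) * (2 * n + 5) * (2 * n + 7) * (2 * n + 9) := by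
      rw [← sub_nonneg]
      ring_nf
      positivity
    rw [c2sq_denominator]
    push_cast
    exact div_le_div_of_nonneg_left (by positivity) (by positivity)
      (denominator_le.trans_eq (by ring))

theorem time_reconstruction_L2_bound_general {t₀ t₁ : ℝ} (h01 : t₀ < t₁) {q : ℕ} (hq : 2 ≤ q)
    {v : ℕ → H} (hv : ∀ i, q + 1 < i → v i = 0) {j : H} {u : ℕ → H}
    (hu : IsTimeRecon t₀ t₁ q v j u) :
    (∫ t in t₀..t₁, ‖polyEval (q + 1) v t - polyEval (q + 1) u t‖ ^ 2)
      ≤ (t₁ - t₀) ^ 3 * c2sq q * ‖j‖ ^ 2 := by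
  obtain ⟨n, rfl⟩ := Nat.exists_eq_add_of_le' hq
  have profile := (isReconProfile_unitReconProfile n).rescale h01.ne
  rw [hu.integral_norm_sub_sq_eq h01 (by omega) hv profile, polyIntegral_rescaleProfile_sq h01.ne]
  have : 0 < t₁ - t₀ := sub_pos.mpr h01
  gcongr
  exact polyIntegral_unitReconProfile_sq_le_c2sq n

end TimeReconstruction

/-- L² bound for the time reconstruction error:
`∫_I ‖V - Û‖² ≤ τ³ · c₂(q)² · ‖j‖²`. -/
theorem time_reconstruction_L2_bound
    {H : Type*} [NormedAddCommGroup H] [InnerProductSpace ℝ H] [CompleteSpace H]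
    (t₀ t₁ : ℝ) (h01 : t₀ < t₁) (q : ℕ) (hq : 2 ≤ q)
    (v : ℕ → H) (hv : ∀ i, q < i → v i = 0) (j : H)
    (u : ℕ → H) (hu : IsTimeRecon t₀ t₁ q v j u) :
    (∫ t in t₀..t₁, ‖polyEval (q + 1) v t - polyEval (q + 1) u t‖ ^ 2)
      ≤ (t₁ - t₀) ^ 3 * c2sq q * ‖j‖ ^ 2 := by
  exact time_reconstruction_L2_bound_general h01 hq (fun i hi => hv i (by omega)) hu
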